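/- Let T : ℝ^n → ℝ^n be nonexpansive with nonempty fixed-point set, let λ ∈ (0,1), and let (v^t)_{t∈ℕ} be a summable sequence in ℝ^n. Then the inexact Krasnosel'skii–Mann iteration x^{t+1} = x^t + λ(T(x^t) − x^t) + v^t is asymptotically regular for every x^0 ∈ ℝ^n: ‖x^{t+1} − x^t‖ → 0 as t → ∞, and equivalently the fixed-point residual satisfies ‖T(x^t) − x^t‖ → 0. -/

import Mathlib

open Filter Topology

/-- A relaxed step of a nonexpansive map decreases the squared distance to a fixed point by a
multiple of the squared residual. -/
theorem norm_relaxed_step_sub_sq_le {E : Type*} [NormedAddCommGroup E] [InnerProductSpace ℝ E]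
    {T : E → E} (hT : ∀ x y, ‖T x - T y‖ ≤ ‖x - y‖) {p : E} (hp : T p = p)
    {lam : ℝ} (hlam : 0 ≤ lam) (x : E) :
    ‖x + lam • (T x - x) - p‖ ^ 2 ≤ ‖x - p‖ ^ 2 - lam * (1 - lam) * ‖T x - x‖ ^ 2 := by
  have h1 : ‖T x - p‖ ^ 2 ≤ ‖x - p‖ ^ 2 := by
    have h := hT x p
    rw [hp] at h
    gcongr
  have h2 : T x - p = (x - p) + (T x - x) := by abel
  have h3 : x + lam • (T x - x) - p = (x - p) + lam • (T x - x) := by abel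
  rw [h2, norm_add_sq_real] at h1
  rw [h3, norm_add_sq_real, norm_smul, inner_smul_right, mul_pow, Real.norm_eq_abs, sq_abs]
  nlinarith [mul_le_mul_of_nonneg_left h1 hlam]

/-- A nonnegative sequence whose increments are controlled by a summable error minus a nonnegative
decrease of squares has a summable decrease. -/
theorem summable_of_sq_decrease {a b e r : ℕ → ℝ} (ha : ∀ t, 0 ≤ a t)
    (he : ∀ t, 0 ≤ e t) (hr : ∀ t, 0 ≤ r t) (hsum : Summable e)
    (hstep : ∀ t, a (t + 1) ≤ b t + e t) (hdec : ∀ t, b t ^ 2 ≤ a t ^ 2 - r t) :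
    Summable r := by
  have hba t : b t ≤ a t := by
    have := hdec t
    have := hr t
    exact abs_le_of_sq_le_sq' (by linarith) (ha t) |>.2
  have hpart t : ∑ i ∈ Finset.range t, e i ≤ ∑' i, e i :=
    hsum.sum_le_tsum _ fun i _ => he i
  have hgrow t : a t ≤ a 0 + ∑ i ∈ Finset.range t, e i := by
    induction t with
    | zero => simp
    | succ t ih =>
      rw [Finset.sum_range_succ]
      linarith [hstep t, hba t]
  have hbound t : a t ≤ a 0 + ∑' i, e i := (hgrow t).trans (by linarith [hpart t])
  have heS t : e t ≤ ∑' i, e i := hsum.le_tsum t fun i _ => he i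
  set S := ∑' i, e i
  have hS : 0 ≤ S := (he 0).trans (heS 0)
  set K := 2 * (a 0 + S) + S
  have hsq t : a (t + 1) ^ 2 + r t ≤ a t ^ 2 + K * e t := by
    have h1 : a (t + 1) ^ 2 ≤ (b t + e t) ^ 2 := pow_le_pow_left₀ (ha _) (hstep t) 2
    have h2 : b t * e t ≤ (a 0 + S) * e t :=
      mul_le_mul_of_nonneg_right ((hba t).trans (hbound t)) (he t)
    have h3 : e t * e t ≤ S * e t := mul_le_mul_of_nonneg_right (heS t) (he t)
    have h4 : K * e t = 2 * ((a 0 + S) * e t) + S * e t := by ring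
    nlinarith [hdec t]
  have htel t : a t ^ 2 + ∑ i ∈ Finset.range t, r i
      ≤ a 0 ^ 2 + K * ∑ i ∈ Finset.range t, e i := by
    induction t with
    | zero => simp
    | succ t ih =>
      rw [Finset.sum_range_succ, Finset.sum_range_succ, mul_add]
      linarith [hsq t]
  have hK : 0 ≤ K := by
    have := ha 0
    positivity
  refine summable_of_sum_range_le (c := a 0 ^ 2 + K * S) hr fun t => ?_
  linarith [htel t, sq_nonneg (a t), mul_le_mul_of_nonneg_left (hpart t) hK]

/-- Asymptotic regularity of the inexact Krasnosel'skii–Mann iteration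
`x^{t+1} = x^t + λ (T x^t - x^t) + v^t` with summable perturbations:
both the step lengths `‖x^{t+1} - x^t‖` and the fixed-point residuals
`‖T x^t - x^t‖` tend to zero. -/
theorem inexact_KM_asymptotically_regular
    {n : ℕ} (T : EuclideanSpace ℝ (Fin n) → EuclideanSpace ℝ (Fin n))
    (hT : ∀ x y, ‖T x - T y‖ ≤ ‖x - y‖)
    (hfix : {p : EuclideanSpace ℝ (Fin n) | T p = p}.Nonempty)
    (lam : ℝ) (hlam0 : 0 < lam) (hlam1 : lam < 1)
    (v : ℕ → EuclideanSpace ℝ (Fin n)) (hv : Summable fun t => ‖v t‖)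
    (x : ℕ → EuclideanSpace ℝ (Fin n))
    (hx : ∀ t, x (t + 1) = x t + lam • (T (x t) - x t) + v t) :
    Tendsto (fun t => ‖x (t + 1) - x t‖) atTop (𝓝 0) ∧
      Tendsto (fun t => ‖T (x t) - x t‖) atTop (𝓝 0) := by
  obtain ⟨p, hp⟩ := hfix
  have hc : 0 < lam * (1 - lam) := mul_pos hlam0 (by linarith)
  have hsum : Summable fun t => lam * (1 - lam) * ‖T (x t) - x t‖ ^ 2 := by
    refine summable_of_sq_decrease (a := fun t => ‖x t - p‖)
      (b := fun t => ‖x t + lam • (T (x t) - x t) - p‖) (e := fun t => ‖v t‖)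
      (fun _ => norm_nonneg _) (fun _ => norm_nonneg _)
      (fun _ => by positivity) hv (fun t => ?_)
      fun t => norm_relaxed_step_sub_sq_le hT hp hlam0.le (x t)
    rw [hx t, add_sub_right_comm]
    exact norm_add_le _ _
  have hres : Tendsto (fun t => ‖T (x t) - x t‖) atTop (𝓝 0) := by
    have h := ((summable_mul_left_iff hc.ne').1 hsum).tendsto_atTop_zero.sqrt
    simpa using h
  refine ⟨?_, hres⟩
  refine squeeze_zero (g := fun t => lam * ‖T (x t) - x t‖ + ‖v t‖)
    (fun _ => norm_nonneg _) (fun t => ?_)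
    (by simpa using (hres.const_mul lam).add hv.tendsto_atTop_zero)
  have h : x (t + 1) - x t = lam • (T (x t) - x t) + v t := by
    rw [hx t]
    abel
  rw [h]
  refine (norm_add_le _ _).trans_eq ?_
  rw [norm_smul, Real.norm_of_nonneg hlam0.le]
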